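/- Let A_1 and A_2 be real 2×2 matrices, each with determinant 1, and suppose there exist complex 2×2 unitary matrices U_1, U_2, V such that U_iᴴ A_i V is upper triangular with both diagonal entries equal to 1 for i = 1, 2. Then there exist real orthogonal 4×4 matrices 𝒰_1, 𝒰_2, 𝒱 such that for i = 1, 2 the matrix 𝒰_iᵀ (I_2 ⊗ A_i) 𝒱 is upper triangular with all four diagonal entries equal to 1; moreover 𝒱 can be chosen of the orthogonal space-time block-code form with rows (a, −c, b, d), (b, d, −a, c), (c, a, d, −b), (−d, b, c, a) for some real numbers a, b, c, d. -/

import Mathlib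

open Matrix

/-- The `4 × 4` block-diagonal extension `I_2 ⊗ A` of a `2 × 2` real matrix. -/
def blockDiag2 (A : Matrix (Fin 2) (Fin 2) ℝ) : Matrix (Fin 4) (Fin 4) ℝ :=
  !![A 0 0, A 0 1, 0, 0;
     A 1 0, A 1 1, 0, 0;
     0, 0, A 0 0, A 0 1;
     0, 0, A 1 0, A 1 1]

/-- The orthogonal space-time block-code (real orthogonal design) structure. -/
def stbc (a b c d : ℝ) : Matrix (Fin 4) (Fin 4) ℝ :=
  !![a, -c, b, d;
     b, d, -a, c;
     c, a, d, -b;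
     -d, b, c, a]


lemma stbc_orth (a b c d : ℝ) (h : a ^ 2 + b ^ 2 + c ^ 2 + d ^ 2 = 1) :
    (stbc a b c d)ᵀ * stbc a b c d = 1 := by
  ext i j
  fin_cases i <;> fin_cases j <;>
    simp [stbc, Matrix.mul_apply, Fin.sum_univ_four] <;> linarith

lemma unit_col (W : Matrix (Fin 2) (Fin 2) ℂ) (h : (Wᴴ * W) 0 0 = 1) :
    (W 0 0).re ^ 2 + (W 0 0).im ^ 2 + (W 1 0).re ^ 2 + (W 1 0).im ^ 2 = 1 := by
  have := congrArg Complex.re h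
  simp [Matrix.mul_apply, Fin.sum_univ_two] at this
  linarith

lemma norm_fact (A : Matrix (Fin 2) (Fin 2) ℝ) (U V : Matrix (Fin 2) (Fin 2) ℂ)
    (hU : Uᴴ * U = 1)
    (htri : ∀ k l : Fin 2, l < k → (Uᴴ * A.map Complex.ofReal * V) k l = 0)
    (hdiag : ∀ k : Fin 2, (Uᴴ * A.map Complex.ofReal * V) k k = 1) :
    (A 0 0 * (V 0 0).re + A 0 1 * (V 1 0).re) ^ 2
      + (A 1 0 * (V 0 0).re + A 1 1 * (V 1 0).re) ^ 2
      + (A 0 0 * (V 0 0).im + A 0 1 * (V 1 0).im) ^ 2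
      + (A 1 0 * (V 0 0).im + A 1 1 * (V 1 0).im) ^ 2 = 1 := by
  have hU' : U * Uᴴ = 1 := mul_eq_one_comm.mp hU
  set W := Uᴴ * A.map Complex.ofReal * V with hW
  have h1 : A.map Complex.ofReal * V = U * W := by
    rw [hW, ← Matrix.mul_assoc, ← Matrix.mul_assoc, hU', Matrix.one_mul]
  have h2 : ((A.map Complex.ofReal * V)ᴴ * (A.map Complex.ofReal * V)) 0 0 = 1 := by
    rw [h1, Matrix.conjTranspose_mul, Matrix.mul_assoc, ← Matrix.mul_assoc Uᴴ, hU,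
      Matrix.one_mul]
    have a1 := htri 1 0 (by decide)
    have a2 := hdiag 0
    clear_value W
    simp [Matrix.mul_apply, Fin.sum_univ_two, a1, a2]
  have h3 := unit_col _ h2
  simp [Matrix.mul_apply, Fin.sum_univ_two] at h3
  linarith

lemma tri_fact (A : Matrix (Fin 2) (Fin 2) ℝ) (hA : A.det = 1) (a b c d : ℝ)
    (hv : a ^ 2 + b ^ 2 + c ^ 2 + d ^ 2 = 1)
    (hn : (A 0 0 * a + A 0 1 * b) ^ 2 + (A 1 0 * a + A 1 1 * b) ^ 2
      + (A 0 0 * c - A 0 1 * d) ^ 2 + (A 1 0 * c - A 1 1 * d) ^ 2 = 1) :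
    ∃ U : Matrix (Fin 4) (Fin 4) ℝ, Uᵀ * U = 1 ∧
      (∀ k l : Fin 4, l < k → (Uᵀ * blockDiag2 A * stbc a b c d) k l = 0) ∧
      (∀ k : Fin 4, (Uᵀ * blockDiag2 A * stbc a b c d) k k = 1) := by
  rw [Matrix.det_fin_two] at hA
  refine ⟨stbc (A 0 0 * a + A 0 1 * b) (A 1 0 * a + A 1 1 * b)
    (A 0 0 * c - A 0 1 * d) (-(A 1 0 * c - A 1 1 * d)), stbc_orth _ _ _ _ (by linarith), ?_, ?_⟩
  · intro k l hkl
    fin_cases k <;> fin_cases l <;> first | exact absurd hkl (by decide) | skip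
    all_goals
      simp [stbc, blockDiag2, Matrix.mul_apply, Fin.sum_univ_four]
      ring
  · intro k
    have e : (A 0 0 * A 1 1 - A 0 1 * A 1 0) * (a ^ 2 + b ^ 2 + c ^ 2 + d ^ 2) = 1 := by
      rw [hA, hv, one_mul]
    fin_cases k <;> simp [stbc, blockDiag2, Matrix.mul_apply, Fin.sum_univ_four]
    · linarith
    · linarith
    · linarith
    · linarith

/-- If two real `2 × 2` unit-determinant matrices admit a simultaneous
unit-diagonal triangularization by complex unitaries, then their `4 × 4`
block-diagonal extensions `I_2 ⊗ Aᵢ` admit one by *real orthogonal* matrices,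
in which the common right matrix `𝒱` has the orthogonal space-time block-code
form. -/
theorem real_space_time_twoGMD
    (A₁ A₂ : Matrix (Fin 2) (Fin 2) ℝ) (h₁ : A₁.det = 1) (h₂ : A₂.det = 1)
    (U₁ U₂ V : Matrix (Fin 2) (Fin 2) ℂ)
    (hU₁ : U₁ᴴ * U₁ = 1) (hU₂ : U₂ᴴ * U₂ = 1) (hV : Vᴴ * V = 1)
    (htri₁ : ∀ k l : Fin 2, l < k → (U₁ᴴ * A₁.map Complex.ofReal * V) k l = 0)
    (hdiag₁ : ∀ k : Fin 2, (U₁ᴴ * A₁.map Complex.ofReal * V) k k = 1)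
    (htri₂ : ∀ k l : Fin 2, l < k → (U₂ᴴ * A₂.map Complex.ofReal * V) k l = 0)
    (hdiag₂ : ∀ k : Fin 2, (U₂ᴴ * A₂.map Complex.ofReal * V) k k = 1) :
    ∃ (𝒰₁ 𝒰₂ : Matrix (Fin 4) (Fin 4) ℝ) (a b c d : ℝ),
      𝒰₁ᵀ * 𝒰₁ = 1 ∧ 𝒰₂ᵀ * 𝒰₂ = 1 ∧ (stbc a b c d)ᵀ * stbc a b c d = 1 ∧
      (∀ k l : Fin 4, l < k → (𝒰₁ᵀ * blockDiag2 A₁ * stbc a b c d) k l = 0) ∧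
      (∀ k : Fin 4, (𝒰₁ᵀ * blockDiag2 A₁ * stbc a b c d) k k = 1) ∧
      (∀ k l : Fin 4, l < k → (𝒰₂ᵀ * blockDiag2 A₂ * stbc a b c d) k l = 0) ∧
      (∀ k : Fin 4, (𝒰₂ᵀ * blockDiag2 A₂ * stbc a b c d) k k = 1) := by
  have hv := unit_col V (by rw [hV]; rfl)
  have n1 := norm_fact A₁ U₁ V hU₁ htri₁ hdiag₁
  have n2 := norm_fact A₂ U₂ V hU₂ htri₂ hdiag₂
  have hv' : (V 0 0).re ^ 2 + (V 1 0).re ^ 2 + (V 0 0).im ^ 2 + (-(V 1 0).im) ^ 2 = 1 := by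
    linarith
  obtain ⟨X, x1, x2, x3⟩ := tri_fact A₁ h₁ (V 0 0).re (V 1 0).re (V 0 0).im (-(V 1 0).im) hv'
    (by linarith)
  obtain ⟨Y, y1, y2, y3⟩ := tri_fact A₂ h₂ (V 0 0).re (V 1 0).re (V 0 0).im (-(V 1 0).im) hv'
    (by linarith)
  exact ⟨X, Y, _, _, _, _, x1, y1, stbc_orth _ _ _ _ hv', x2, x3, y2, y3⟩
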